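/- Let Ψ ∈ PGL_{n+1}(F_q) be transitive on ℙ^n. Then there is exactly one point P ∈ ℙ^n such that Ψ^i(P) ∈ H for every i ∈ {1,…,n}, and this unique point P lies in U. -/

import Mathlib

/-- The projective automorphism of `ℙ^n(K)` induced by an invertible matrix `M`. -/
noncomputable def projMap {K : Type*} [Field K] {n : ℕ} (M : GL (Fin (n + 1)) K) :
    Projectivization K (Fin (n + 1) → K) → Projectivization K (Fin (n + 1) → K) :=
  Projectivization.map
    ((Matrix.GeneralLinearGroup.toLin M).toLinearEquiv :
      (Fin (n + 1) → K) →ₗ[K] (Fin (n + 1) → K))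
    (Matrix.GeneralLinearGroup.toLin M).toLinearEquiv.injective

/-- The projective automorphism induced by `M` is transitive on `ℙ^n(K)`. -/
def ProjTransitive {K : Type*} [Field K] {n : ℕ} (M : GL (Fin (n + 1)) K) : Prop :=
  ∀ P Q : Projectivization K (Fin (n + 1) → K), ∃ k : ℕ, (projMap M)^[k] P = Q

/-- The affine chart `U = {X_n ≠ 0} ⊆ ℙ^n(K)`. -/
def affineChart (K : Type*) [Field K] (n : ℕ) : Set (Projectivization K (Fin (n + 1) → K)) :=
  {P | P.rep (Fin.last n) ≠ 0}

/-- The hyperplane at infinity `H = {X_n = 0} ⊆ ℙ^n(K)`. -/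
def hyperplaneAtInfinity (K : Type*) [Field K] (n : ℕ) :
    Set (Projectivization K (Fin (n + 1) → K)) :=
  {P | P.rep (Fin.last n) = 0}

/-!
The `n + 1` conditions `φ (fⁱ v) = 0`, `0 ≤ i ≤ n`, force `φ (fᵏ v) = 0` for all `k` by
Cayley-Hamilton, hence `v = 0` as soon as every orbit of `f` on projective space leaves the
hyperplane `φ = 0`. So `v ↦ (φ (fⁱ v))_{0 ≤ i ≤ n}` is an isomorphism `V ≃ Kⁿ⁺¹`, and the points
whose iterates `1, …, n` lie on the hyperplane form the preimage of the line spanned by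
`(1, 0, …, 0)`: a single point, at which `φ ≠ 0`.
-/

open Module

section Observability

section Ring

variable {R V W : Type*} [Ring R] [AddCommGroup V] [Module R V] [AddCommGroup W] [Module R W]

/-- A pair `(f, φ)` is observable, in the sense of linear control theory, if a vector is
determined by the sequence of outputs `φ (fᵏ v)`; by linearity it suffices to ask this of the zero
sequence. -/
def IsObservable (f : End R V) (φ : V →ₗ[R] W) : Prop :=
  ∀ v : V, (∀ k : ℕ, φ ((f ^ k) v) = 0) → v = 0

/-- The observability map of `(f, φ)`, recording the outputs `φ (fⁱ v)` at the times `i < m`. -/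
def observabilityMap (f : End R V) (φ : V →ₗ[R] W) (m : ℕ) : V →ₗ[R] (Fin m → W) :=
  LinearMap.pi fun i => φ ∘ₗ f ^ (i : ℕ)

theorem observabilityMap_apply (f : End R V) (φ : V →ₗ[R] W) (m : ℕ) (v : V) (i : Fin m) :
    observabilityMap f φ m v i = φ ((f ^ (i : ℕ)) v) :=
  rfl

end Ring

section CommRing

open Polynomial

variable {R V W : Type*} [CommRing R] [Nontrivial R] [AddCommGroup V] [Module R V]
  [Module.Free R V] [Module.Finite R V] [AddCommGroup W] [Module R W]

theorem pow_mem_span_pow_lt_finrank (f : End R V) (k : ℕ) :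
    f ^ k ∈ Submodule.span R ((f ^ ·) '' Set.Iio (finrank R V)) := by
  have degree_lt : (X ^ k %ₘ f.charpoly).degree < finrank R V := by
    rw [← f.charpoly_natDegree, ← degree_eq_natDegree f.charpoly_monic.ne_zero]
    exact degree_modByMonic_lt _ f.charpoly_monic
  rw [f.pow_eq_aeval_mod_charpoly, aeval_eq_sum_range]
  refine Submodule.sum_mem _ fun i _ => ?_
  rcases lt_or_ge i (finrank R V) with hi | hi
  · exact Submodule.smul_mem _ _ (Submodule.subset_span ⟨i, hi, rfl⟩)
  · rw [coeff_eq_zero_of_degree_lt (degree_lt.trans_le (by exact_mod_cast hi)), zero_smul]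
    exact Submodule.zero_mem _

theorem map_pow_apply_eq_zero_of_forall_lt_finrank {f : End R V} {φ : V →ₗ[R] W} {v : V}
    (h : ∀ i < finrank R V, φ ((f ^ i) v) = 0) (k : ℕ) : φ ((f ^ k) v) = 0 := by
  have span_le_ker : Submodule.span R ((f ^ ·) '' Set.Iio (finrank R V)) ≤
      (φ ∘ₗ LinearMap.applyₗ v).ker :=
    Submodule.span_le.2 (Set.forall_mem_image.2 h)
  exact span_le_ker (pow_mem_span_pow_lt_finrank f k)

theorem IsObservable.observabilityMap_injective {f : End R V} {φ : V →ₗ[R] W}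
    (h : IsObservable f φ) : Function.Injective (observabilityMap f φ (finrank R V)) :=
  (injective_iff_map_eq_zero _).2 fun v hv =>
    h v (map_pow_apply_eq_zero_of_forall_lt_finrank fun i hi => congrFun hv ⟨i, hi⟩)

end CommRing

variable {K V : Type*} [Field K] [AddCommGroup V] [Module K V]

theorem IsObservable.observabilityMap_bijective [FiniteDimensional K V] {f : End K V}
    {φ : Dual K V} (h : IsObservable f φ) :
    Function.Bijective (observabilityMap f φ (finrank K V)) :=
  ⟨h.observabilityMap_injective,
    (LinearMap.injective_iff_surjective_of_finrank_eq_finrank (by simp)).1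
      h.observabilityMap_injective⟩

theorem IsObservable.exists_forall_map_pow_apply_eq_zero_iff {n : ℕ} (hV : finrank K V = n + 1)
    {f : End K V} {φ : Dual K V} (h : IsObservable f φ) :
    ∃ e : V, φ e = 1 ∧
      ∀ v : V, (∀ i : ℕ, 1 ≤ i → i ≤ n → φ ((f ^ i) v) = 0) ↔ v = φ v • e := by
  have : FiniteDimensional K V := .of_finrank_eq_succ hV
  have bijective : Function.Bijective (observabilityMap f φ (n + 1)) :=
    hV ▸ h.observabilityMap_bijective
  obtain ⟨e, he⟩ := bijective.surjective (Pi.single 0 1)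
  have map_pow_e (i : Fin (n + 1)) :
      φ ((f ^ (i : ℕ)) e) = (Pi.single 0 1 : Fin (n + 1) → K) i := by
    rw [← he, observabilityMap_apply]
  have map_e : φ e = 1 := by simpa using map_pow_e 0
  refine ⟨e, map_e, fun v => ⟨fun hv => bijective.injective (funext fun i => ?_), ?_⟩⟩
  · simp only [observabilityMap_apply, map_smul, map_pow_e]
    cases i using Fin.cases with
    | zero => simp
    | succ j => simpa using hv (j + 1) (by omega) (by omega)
  · intro hv i one_le le_n
    have ne_zero : (⟨i, by omega⟩ : Fin (n + 1)) ≠ 0 := Fin.ne_of_val_ne (by simp; omega)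
    rw [hv, map_smul, map_smul, map_pow_e ⟨i, by omega⟩, Pi.single_eq_of_ne ne_zero, smul_zero]

end Observability

section ProjectiveIteration

variable {K V W : Type*} [DivisionRing K] [AddCommGroup V] [Module K V] [AddCommGroup W]
  [Module K W]

theorem projectivization_map_iterate (f : V →ₗ[K] V) (hf : Function.Injective f) (k : ℕ) :
    (Projectivization.map f hf)^[k] =
      Projectivization.map (f ^ k) (End.iterate_injective hf k) := by
  induction k with
  | zero => exact Projectivization.map_id.symm
  | succ k ih =>
    rw [Function.iterate_succ, ih]
    exact (Projectivization.map_comp f hf (f ^ k) _).symm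

theorem map_rep_mk_eq_zero_iff (φ : V →ₗ[K] W) {v : V} (hv : v ≠ 0) :
    φ (Projectivization.mk K v hv).rep = 0 ↔ φ v = 0 := by
  obtain ⟨a, ha⟩ := Projectivization.exists_smul_eq_mk_rep K v hv
  rw [← ha, Units.smul_def, map_smul, smul_eq_zero_iff_right a.ne_zero]

theorem map_rep_iterate_mk_eq_zero_iff (f : V →ₗ[K] V) (hf : Function.Injective f)
    (φ : V →ₗ[K] W) (k : ℕ) {v : V} (hv : v ≠ 0) :
    φ ((Projectivization.map f hf)^[k] (.mk K v hv)).rep = 0 ↔ φ ((f ^ k) v) = 0 := by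
  rw [projectivization_map_iterate, Projectivization.map_mk, map_rep_mk_eq_zero_iff]

theorem isObservable_of_forall_exists_iterate_rep_ne_zero {f : V →ₗ[K] V}
    (hf : Function.Injective f) {φ : V →ₗ[K] W}
    (h : ∀ P, ∃ k : ℕ, φ ((Projectivization.map f hf)^[k] P).rep ≠ 0) : IsObservable f φ := by
  intro v hv
  by_contra v_ne_zero
  obtain ⟨k, hk⟩ := h (.mk K v v_ne_zero)
  exact hk ((map_rep_iterate_mk_eq_zero_iff f hf φ k v_ne_zero).2 (hv k))

end ProjectiveIteration

theorem affineChart_nonempty (K : Type*) [Field K] (n : ℕ) : (affineChart K n).Nonempty := by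
  have single_ne_zero : (Pi.single (Fin.last n) 1 : Fin (n + 1) → K) ≠ 0 := by simp
  refine ⟨.mk K _ single_ne_zero, ?_⟩
  have rep_last_eq_zero_iff :=
    map_rep_mk_eq_zero_iff (K := K) (LinearMap.proj (Fin.last n)) single_ne_zero
  exact rep_last_eq_zero_iff.not.2 (by simp)

theorem ProjTransitive.exists_iterate_mem_affineChart {K : Type*} [Field K] {n : ℕ}
    {M : GL (Fin (n + 1)) K} (h : ProjTransitive M)
    (P : Projectivization K (Fin (n + 1) → K)) : ∃ k : ℕ, (projMap M)^[k] P ∈ affineChart K n := by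
  obtain ⟨Q, hQ⟩ := affineChart_nonempty K n
  obtain ⟨k, hk⟩ := h P Q
  exact ⟨k, hk ▸ hQ⟩

theorem statement8_general {K V : Type*} [Field K] [AddCommGroup V] [Module K V] {n : ℕ}
    (hV : finrank K V = n + 1) (f : V →ₗ[K] V) (hf : Function.Injective f) (φ : Dual K V)
    (h : ∀ P, ∃ k : ℕ, φ ((Projectivization.map f hf)^[k] P).rep ≠ 0) :
    (∃! P : Projectivization K V,
        ∀ i : ℕ, 1 ≤ i → i ≤ n → φ ((Projectivization.map f hf)^[i] P).rep = 0) ∧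
      ∀ P : Projectivization K V,
        (∀ i : ℕ, 1 ≤ i → i ≤ n → φ ((Projectivization.map f hf)^[i] P).rep = 0) →
          φ P.rep ≠ 0 := by
  have observable : IsObservable f φ := isObservable_of_forall_exists_iterate_rep_ne_zero hf h
  obtain ⟨e, map_e, eq_smul_e_iff⟩ := observable.exists_forall_map_pow_apply_eq_zero_iff hV
  have e_ne_zero : e ≠ 0 := by
    rintro rfl
    simp at map_e
  have condition_mk_iff {v : V} (hv : v ≠ 0) : (∀ i : ℕ, 1 ≤ i → i ≤ n →
      φ ((Projectivization.map f hf)^[i] (.mk K v hv)).rep = 0) ↔ v = φ v • e := by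
    simp only [map_rep_iterate_mk_eq_zero_iff, eq_smul_e_iff]
  refine ⟨⟨.mk K e e_ne_zero, (condition_mk_iff e_ne_zero).2 (by rw [map_e, one_smul]), ?_⟩, ?_⟩
  · intro P hP
    induction P with | h v v_ne_zero =>
    exact (Projectivization.mk_eq_mk_iff' K v e _ _).2
      ⟨φ v, ((condition_mk_iff v_ne_zero).1 hP).symm⟩
  · intro P hP
    induction P with | h v v_ne_zero =>
    rw [Ne, map_rep_mk_eq_zero_iff]
    intro map_v
    exact v_ne_zero (by rw [(condition_mk_iff v_ne_zero).1 hP, map_v, zero_smul])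

/-- If `Ψ = [M] ∈ PGL_{n+1}(F_q)` is transitive on `ℙ^n`, then there is exactly one point
`P ∈ ℙ^n` with `Ψ^i(P) ∈ H` for all `i ∈ {1, …, n}`, and this unique point lies in `U`. -/
theorem statement8 {K : Type*} [Field K] [Fintype K] (n : ℕ) (hn : 0 < n)
    (M : GL (Fin (n + 1)) K) (htrans : ProjTransitive M) :
    (∃! P : Projectivization K (Fin (n + 1) → K),
        ∀ i : ℕ, 1 ≤ i → i ≤ n → (projMap M)^[i] P ∈ hyperplaneAtInfinity K n) ∧
      ∀ P : Projectivization K (Fin (n + 1) → K),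
        (∀ i : ℕ, 1 ≤ i → i ≤ n → (projMap M)^[i] P ∈ hyperplaneAtInfinity K n) →
          P ∈ affineChart K n := by
  exact statement8_general (finrank_fin_fun K) _ _ (LinearMap.proj (Fin.last n))
    htrans.exists_iterate_mem_affineChart
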